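/- Let n, m ≥ 4 be integers and let G = P_n □ P_m be the grid. If a and b are integers with 2 ≤ a ≤ n−1 and 2 ≤ b ≤ m−1, then ab ∈ S_SC(G). -/

import Mathlib

/-!  Common definitions: oriented graphs, geodesic convexity, convexity number,
strong convexity spectrum, and grid graphs. -/

variable {V : Type*}

/-- A directed walk of length `k` from `u` to `v` along the arc relation `A`,
encoded by the function `f` listing its vertices. -/
def IsDirWalk (A : V → V → Prop) (k : ℕ) (f : ℕ → V) (u v : V) : Prop :=
  f 0 = u ∧ f k = v ∧ ∀ i, i < k → A (f i) (f (i + 1))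

/-- There is a directed walk from `u` to `v`. -/
def DirReachable (A : V → V → Prop) (u v : V) : Prop :=
  ∃ k f, IsDirWalk A k f u v

/-- A digraph (given by its arc relation) is strongly connected. -/
def StrongConnected (A : V → V → Prop) : Prop :=
  ∀ u v : V, DirReachable A u v

/-- A `uv`-geodesic: a directed walk from `u` to `v` of minimum possible length
(such a walk is automatically a directed path). -/
def IsGeodesic (A : V → V → Prop) (k : ℕ) (f : ℕ → V) (u v : V) : Prop :=
  IsDirWalk A k f u v ∧ ∀ k' f', IsDirWalk A k' f' u v → k ≤ k'

/-- A nonempty vertex set `C` is convex if every vertex lying on a geodesic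
between two vertices of `C` (in either direction) belongs to `C`. -/
def DConvex (A : V → V → Prop) (C : Set V) : Prop :=
  C.Nonempty ∧ ∀ u ∈ C, ∀ v ∈ C, ∀ k f, IsGeodesic A k f u v → ∀ i ≤ k, f i ∈ C

/-- `A` is an orientation of the simple graph `G`: every arc is along an edge,
every edge gets an arc, and no edge gets both directions. -/
def IsOrientation (G : SimpleGraph V) (A : V → V → Prop) : Prop :=
  (∀ x y, A x y → G.Adj x y) ∧ (∀ x y, G.Adj x y → A x y ∨ A y x) ∧
    (∀ x y, A x y → ¬ A y x)

/-- The convexity number of a digraph: the maximum cardinality of a proper convex set. -/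
noncomputable def convexityNumber [Fintype V] (A : V → V → Prop) : ℕ :=
  sSup {k | ∃ C : Set V, DConvex A C ∧ C ≠ Set.univ ∧ C.ncard = k}

/-- The strong convexity spectrum of a graph: the set of convexity numbers of
its strongly connected orientations. -/
def strongConvexitySpectrum [Fintype V] (G : SimpleGraph V) : Set ℕ :=
  {k | ∃ A : V → V → Prop, IsOrientation G A ∧ StrongConnected A ∧ convexityNumber A = k}

/-- The grid graph `P_n □ P_m`. -/
def gridGraph (n m : ℕ) : SimpleGraph (Fin n × Fin m) :=
  (SimpleGraph.pathGraph n).boxProd (SimpleGraph.pathGraph m)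

/-- The parity type of a vertex: `True` means horizontal arcs go out. -/
def PT (A B i j : ℕ) : Prop :=
  (i ≤ A ∧ j ≤ B ∧ (i + j + A + B) % 2 = 0) ∨ ((A < i ∨ B < j) ∧ (i + j + A + B) % 2 = 1)

/-- The arc relation in natural number coordinates. -/
def arcN (A B i j i' j' : ℕ) : Prop :=
  (i = i' ∧ j = j' + 1 ∧ PT A B i j) ∨ (i = i' ∧ j' = j + 1 ∧ ¬ PT A B i j') ∨
  (j = j' ∧ i' = i + 1 ∧ PT A B i' j) ∨ (j = j' ∧ i = i' + 1 ∧ ¬ PT A B i j)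

/-- Squares that are directed 4-cycles. -/
def cyc (A B i j : ℕ) : Prop :=
  (i + 1 ≤ A ∧ j + 1 ≤ B) ∨ A < i ∨ B < j ∨ (i = A ∧ j = B)

/-- All four corners of a square. -/
def Sq (K : ℕ → ℕ → Prop) (i j : ℕ) : Prop :=
  K i j ∧ K i (j + 1) ∧ K (i + 1) j ∧ K (i + 1) (j + 1)

/-- One side of a square. -/
def Side (K : ℕ → ℕ → Prop) (i j : ℕ) : Prop :=
  (K i j ∧ K i (j + 1)) ∨ (K i j ∧ K (i + 1) j) ∨ (K (i + 1) j ∧ K (i + 1) (j + 1)) ∨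
    (K i (j + 1) ∧ K (i + 1) (j + 1))

/-- Direction-free closure rules. -/
structure Rules (n m A B : ℕ) (K : ℕ → ℕ → Prop) : Prop where
  bd : ∀ i j, K i j → i < n ∧ j < m
  out : ∀ i j i' j', (A < i ∨ B < j) → i < n → j < m → (i' = i + 1 ∨ i = i' + 1) →
    (j' = j + 1 ∨ j = j' + 1) → K i' j → K i j' → K i j
  sq : ∀ i j, cyc A B i j → i + 1 < n → j + 1 < m → Side K i j → Sq K i j

theorem conn (Q : ℕ → Prop) (lo hi : ℕ) (h : ∀ k, lo ≤ k → k + 1 ≤ hi → (Q k ↔ Q (k + 1)))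
    (x y : ℕ) (hx : lo ≤ x) (hx' : x ≤ hi) (hy : lo ≤ y) (hy' : y ≤ hi) (hQ : Q x) : Q y := by
  have key : ∀ d, lo + d ≤ hi → (Q lo ↔ Q (lo + d)) := by
    intro d
    induction d with
    | zero => intro _; rfl
    | succ d ih =>
      intro hd
      exact (ih (by omega)).trans (h (lo + d) (by omega) (by omega))
  have h1 := key (x - lo) (by omega)
  have h2 := key (y - lo) (by omega)
  rw [show lo + (x - lo) = x by omega] at h1
  rw [show lo + (y - lo) = y by omega] at h2
  exact h2.1 (h1.2 hQ)

theorem Rules.transpose {n m A B : ℕ} {K : ℕ → ℕ → Prop} (h : Rules n m A B K) :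
    Rules m n B A (fun i j => K j i) where
  bd i j hK := (h.bd j i hK).symm
  out i j i' j' ho hi hj hi' hj' h1 h2 := h.out j i j' i' ho.symm hj hi hj' hi' h2 h1
  sq i j hc hi hj hs := by
    have := h.sq j i (by unfold cyc at *; omega) hj hi (by unfold Side at *; tauto)
    unfold Sq at *; tauto

section
variable {n m A B : ℕ} {K : ℕ → ℕ → Prop}

theorem Rules.moveH (h : Rules n m A B K) (i j : ℕ) (h1 : cyc A B i j) (h2 : cyc A B i (j + 1))
    (hi : i + 1 < n) (hj : j + 2 < m) : Sq K i j ↔ Sq K i (j + 1) := by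
  constructor
  · intro hs
    exact h.sq _ _ h2 hi hj (Or.inr (Or.inl ⟨hs.2.1, hs.2.2.2⟩))
  · intro hs
    exact h.sq _ _ h1 hi (by omega) (Or.inr (Or.inr (Or.inr ⟨hs.1, hs.2.2.1⟩)))

theorem Rules.moveV (h : Rules n m A B K) (i j : ℕ) (h1 : cyc A B i j) (h2 : cyc A B (i + 1) j)
    (hi : i + 2 < n) (hj : j + 1 < m) : Sq K i j ↔ Sq K (i + 1) j := by
  constructor
  · intro hs
    exact h.sq _ _ h2 hi hj (Or.inl ⟨hs.2.2.1, hs.2.2.2⟩)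
  · intro hs
    exact h.sq _ _ h1 (by omega) hj (Or.inr (Or.inr (Or.inl ⟨hs.1, hs.2.1⟩)))

theorem Rules.lineH (h : Rules n m A B K) (i lo hi : ℕ)
    (hc : ∀ j, lo ≤ j → j ≤ hi → cyc A B i j) (hin : i + 1 < n) (hhi : hi + 1 < m)
    (x y : ℕ) (hx : lo ≤ x) (hx' : x ≤ hi) (hy : lo ≤ y) (hy' : y ≤ hi) (hs : Sq K i x) :
    Sq K i y :=
  conn (fun j => Sq K i j) lo hi (fun k hk hk' => h.moveH i k (hc k hk (by omega))
    (hc (k + 1) (by omega) hk') hin (by omega)) x y hx hx' hy hy' hs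

theorem Rules.lineV (h : Rules n m A B K) (j lo hi : ℕ)
    (hc : ∀ i, lo ≤ i → i ≤ hi → cyc A B i j) (hin : j + 1 < m) (hhi : hi + 1 < n)
    (x y : ℕ) (hx : lo ≤ x) (hx' : x ≤ hi) (hy : lo ≤ y) (hy' : y ≤ hi) (hs : Sq K x j) :
    Sq K y j :=
  conn (fun i => Sq K i j) lo hi (fun k hk hk' => h.moveV k j (hc k hk (by omega))
    (hc (k + 1) (by omega) hk') (by omega) hin) x y hx hx' hy hy' hs

theorem Rules.fillR (h : Rules n m A B K) (hn : A + 1 < n) (hm : B + 1 < m)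
    (i0 j0 : ℕ) (hi0 : i0 + 1 ≤ A) (hj0 : j0 + 1 ≤ B) (hs : Sq K i0 j0) :
    ∀ i j, i ≤ A → j ≤ B → K i j := by
  have key : ∀ i j, i + 1 ≤ A → j + 1 ≤ B → Sq K i j := by
    intro i j hi hj
    have h1 : Sq K i0 j := h.lineH i0 0 (B - 1) (fun j _ _ => by unfold cyc; omega) (by omega)
      (by omega) j0 j (by omega) (by omega) (by omega) (by omega) hs
    exact h.lineV j 0 (A - 1) (fun j _ _ => by unfold cyc; omega) (by omega)
      (by omega) i0 i (by omega) (by omega) (by omega) (by omega) h1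
  intro i j hi hj
  rcases Nat.lt_or_ge i A with h1 | h1 <;> rcases Nat.lt_or_ge j B with h2 | h2
  · exact (key i j h1 h2).1
  · have := (key i (B - 1) h1 (by omega)).2.1
    rwa [show B - 1 + 1 = j by omega] at this
  · have := (key (A - 1) j (by omega) h2).2.2.1
    rwa [show A - 1 + 1 = i by omega] at this
  · have := (key (A - 1) (B - 1) (by omega) (by omega)).2.2.2
    rwa [show A - 1 + 1 = i by omega, show B - 1 + 1 = j by omega] at this

theorem Rules.fillR_H (h : Rules n m A B K) (hn : A + 1 < n) (hm : B + 1 < m) (hA : 1 ≤ A)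
    (i j : ℕ) (hi : i ≤ A) (hj : j + 1 ≤ B) (h1 : K i j) (h2 : K i (j + 1)) :
    ∀ i j, i ≤ A → j ≤ B → K i j := by
  rcases Nat.lt_or_ge i A with h3 | h3
  · exact h.fillR hn hm i j h3 hj (h.sq _ _ (by unfold cyc; omega) (by omega) (by omega)
      (Or.inl ⟨h1, h2⟩))
  · obtain ⟨t, rfl⟩ : ∃ t, i = t + 1 := ⟨i - 1, by omega⟩
    exact h.fillR hn hm t j hi hj (h.sq _ _ (by unfold cyc; omega) (by omega) (by omega)
      (Or.inr (Or.inr (Or.inl ⟨h1, h2⟩))))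

theorem Rules.fillR_V (h : Rules n m A B K) (hn : A + 1 < n) (hm : B + 1 < m) (hB : 1 ≤ B)
    (i j : ℕ) (hi : i + 1 ≤ A) (hj : j ≤ B) (h1 : K i j) (h2 : K (i + 1) j) :
    ∀ i j, i ≤ A → j ≤ B → K i j := fun x y hx hy =>
  h.transpose.fillR_H hm hn hB j i hj hi h1 h2 y x hy hx

/-- An outer square generates the corner square. -/
theorem Rules.corner (h : Rules n m A B K) (hn : A + 1 < n) (hm : B + 1 < m)
    (i j : ℕ) (hi : i + 1 < n) (hj : j + 1 < m)
    (hc : A < i ∨ B < j ∨ (i = A ∧ j = B)) (hs : Sq K i j) : Sq K A B := by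
  -- main quadrant
  have quad : ∀ i j, A ≤ i → B ≤ j → i + 1 < n → j + 1 < m → Sq K i j → Sq K A B := by
    intro i j hi hj hin hjm hs
    rcases Nat.lt_or_ge B j with hb | hb
    · have h1 : Sq K A j := h.lineV j A i (fun _ _ _ => by unfold cyc; omega) hjm hin i A
        hi le_rfl le_rfl hi hs
      exact h.lineH A B j (fun _ _ _ => by unfold cyc; omega) hn hjm j B
        hj le_rfl le_rfl hj h1
    · obtain rfl : j = B := by omega
      exact h.lineV j A i (fun _ _ _ => by unfold cyc; omega) hjm hin i A
        hi le_rfl le_rfl hi hs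
  by_cases h1 : A ≤ i
  · by_cases h2 : B ≤ j
    · exact quad i j h1 h2 hi hj hs
    · have h3 : Sq K i B := h.lineH i 0 B (fun _ _ _ => by unfold cyc; omega) hi hm j B
        (by omega) (by omega) (by omega) (by omega) hs
      exact quad i B h1 le_rfl hi hm h3
  · have h3 : Sq K A j := h.lineV j 0 A (fun _ _ _ => by unfold cyc; omega) hj hn i A
        (by omega) (by omega) (by omega) (by omega) hs
    exact quad A j le_rfl (by omega) hn hj h3

theorem Rules.quad (h : Rules n m A B K) (hn : A + 1 < n) (hm : B + 1 < m)
    (hs : Sq K A B) (i j : ℕ) (hi : A ≤ i) (hj : B ≤ j) (hin : i + 1 < n) (hjm : j + 1 < m) :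
    Sq K i j := by
  have h1 : Sq K i B := h.lineV B A i (fun _ _ _ => by unfold cyc; omega) hm hin A i
        le_rfl hi hi le_rfl hs
  rcases Nat.lt_or_ge A i with hb | hb
  · exact h.lineH i B j (fun _ _ _ => by unfold cyc; omega) hin hjm B j
        le_rfl hj hj le_rfl h1
  · obtain rfl : i = A := by omega
    exact h.lineH i B j (fun _ _ _ => by unfold cyc; omega) hin hjm B j
        le_rfl hj hj le_rfl h1

/-- The right region is filled from `R` and the quadrant. -/
theorem Rules.right (h : Rules n m A B K) (hn : A + 1 < n) (hm : B + 1 < m)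
    (hs : Sq K A B) (hR : ∀ i j, i ≤ A → j ≤ B → K i j) :
    ∀ d i j, i + d = A → j < m → K i j := by
  intro d
  induction d with
  | zero =>
    intro i j hi hj
    obtain rfl : i = A := by omega
    by_cases h1 : j ≤ B
    · exact hR i j le_rfl h1
    · obtain ⟨t, rfl⟩ : ∃ t, j = t + 1 := ⟨j - 1, by omega⟩
      exact (h.quad hn hm hs i t le_rfl (by omega) hn hj).2.1
  | succ d ih =>
    intro i j hi
    induction j with
    | zero => intro _; exact hR i 0 (by omega) (by omega)
    | succ j ihj =>
      intro hj
      by_cases h1 : j + 1 ≤ B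
      · exact hR i _ (by omega) h1
      · exact h.out i (j + 1) (i + 1) j (by omega) (by omega) hj (Or.inl rfl) (Or.inr rfl)
          (ih (i + 1) (j + 1) (by omega) hj) (ihj (by omega))

theorem Rules.all (h : Rules n m A B K) (hn : A + 1 < n) (hm : B + 1 < m)
    (hs : Sq K A B) (hR : ∀ i j, i ≤ A → j ≤ B → K i j) (i j : ℕ) (hi : i < n) (hj : j < m) :
    K i j := by
  by_cases h1 : i ≤ A
  · exact h.right hn hm hs hR (A - i) i j (by omega) hj
  by_cases h2 : j ≤ B
  · refine h.transpose.right hm hn ?_ (fun i j hi hj => hR j i hj hi) (B - j) j i (by omega) hi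
    exact ⟨hs.1, hs.2.2.1, hs.2.1, hs.2.2.2⟩
  · obtain ⟨t, rfl⟩ : ∃ t, j = t + 1 := ⟨j - 1, by omega⟩
    obtain ⟨s, rfl⟩ : ∃ t, i = t + 1 := ⟨i - 1, by omega⟩
    exact (h.quad hn hm hs s t (by omega) (by omega) hi hj).2.2.2

end

/-- Extra rules valid for convex sets with at least two vertices. -/
structure Rules2 (n m A B : ℕ) (K : ℕ → ℕ → Prop) : Prop extends Rules n m A B K where
  nb : ∀ i j, (A < i ∨ B < j) → K i j → (∃ i', (i' = i + 1 ∨ i = i' + 1) ∧ K i' j) ∧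
    ∃ j', (j' = j + 1 ∨ j = j' + 1) ∧ K i j'
  nbR : ∀ i j, K i j → (∃ i', (i' = i + 1 ∨ i = i' + 1) ∧ K i' j) ∨
    ∃ j', (j' = j + 1 ∨ j = j' + 1) ∧ K i j'
  four1 : K A B → K (A - 1) (B + 1) → K (A - 1) B
  four2 : K A B → K (A + 1) (B - 1) → K A (B - 1)

theorem Rules2.transpose {n m A B : ℕ} {K : ℕ → ℕ → Prop} (h : Rules2 n m A B K) :
    Rules2 m n B A (fun i j => K j i) where
  toRules := h.toRules.transpose
  nb i j ho hK := (h.nb j i ho.symm hK).symm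
  nbR i j hK := (h.nbR j i hK).symm
  four1 := h.four2
  four2 := h.four1

section
variable {n m A B : ℕ} {K : ℕ → ℕ → Prop}

/-- A horizontal arc in the lower part generates the corner square; if the arc is not in the
corner square's columns and the lower part is thin then it generates `R` too. -/
theorem Rules2.lowH (h : Rules2 n m A B K) (hn : A + 1 < n) (hm : B + 1 < m) (hA : 1 ≤ A)
    (i j : ℕ) (hi : A < i) (h1 : K i j) (h2 : K i (j + 1)) :
    Sq K A B ∧ (n = A + 2 → j + 1 ≤ B → ∀ i j, i ≤ A → j ≤ B → K i j) := by
  obtain ⟨hin, hjm⟩ := h.bd _ _ h2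
  obtain ⟨s, rfl⟩ : ∃ t, i = t + 1 := ⟨i - 1, by omega⟩
  have thin : s = A → n = A + 2 → j + 1 ≤ B → ∀ i j, i ≤ A → j ≤ B → K i j := by
    rintro rfl hn2 hj
    obtain ⟨⟨x, hx, hKx⟩, -⟩ := h.nb _ _ (Or.inl hi) h1
    obtain ⟨⟨y, hy, hKy⟩, -⟩ := h.nb _ _ (Or.inl hi) h2
    have := h.bd _ _ hKx
    have := h.bd _ _ hKy
    obtain rfl : x = s := by omega
    obtain rfl : y = x := by omega
    exact h.fillR_H hn hm hA y j le_rfl hj hKx hKy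
  refine ⟨?_, fun hn2 => thin (by omega) hn2⟩
  by_cases hq : B ≤ j ∨ A < s
  · exact h.corner hn hm s j hin hjm (by omega) (h.sq s j (by unfold cyc; omega) hin hjm
      (Or.inr (Or.inr (Or.inl ⟨h1, h2⟩))))
  obtain rfl : s = A := by omega
  by_cases hn2 : s + 2 < n
  · exact h.corner hn hm (s + 1) j (by omega) hjm (by omega)
      (h.sq (s + 1) j (by unfold cyc; omega) (by omega) hjm (Or.inl ⟨h1, h2⟩))
  have hR := thin rfl (by omega) (by omega)
  have hrow : ∀ d, j + d ≤ B → K (s + 1) (j + d) := by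
    intro d
    induction d with
    | zero => intro _; exact h1
    | succ d ih =>
      intro hd
      exact h.out _ _ s (j + d) (Or.inl hi) hin (by omega) (Or.inr rfl) (Or.inr rfl)
        (hR _ _ le_rfl hd) (ih (by omega))
  have hB := hrow (B - j) (by omega)
  rw [show j + (B - j) = B by omega] at hB
  exact h.sq s B (by unfold cyc; omega) hn hm (Or.inr (Or.inl ⟨hR s B le_rfl le_rfl, hB⟩))

theorem Rules2.low (h : Rules2 n m A B K) (hn : A + 1 < n) (hm : B + 1 < m) (hA : 1 ≤ A)
    (i j : ℕ) (hi : A < i) (h1 : K i j) :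
    Sq K A B ∧ (n = A + 2 → j < B → ∀ i j, i ≤ A → j ≤ B → K i j) := by
  obtain ⟨-, ⟨y, hy, hKy⟩⟩ := h.nb _ _ (Or.inl hi) h1
  rcases hy with rfl | rfl
  · have := h.lowH hn hm hA i j hi h1 hKy
    exact ⟨this.1, fun h3 h4 => this.2 h3 (by omega)⟩
  · have := h.lowH hn hm hA i y hi hKy h1
    exact ⟨this.1, fun h3 h4 => this.2 h3 (by omega)⟩

theorem Rules2.rgt (h : Rules2 n m A B K) (hn : A + 1 < n) (hm : B + 1 < m) (hB : 1 ≤ B)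
    (i j : ℕ) (hj : B < j) (h1 : K i j) :
    Sq K A B ∧ (m = B + 2 → i < A → ∀ i j, i ≤ A → j ≤ B → K i j) := by
  have := h.transpose.low hm hn hB j i hj h1
  refine ⟨?_, fun h3 h4 x y hx hy => this.2 h3 h4 y x hy hx⟩
  obtain ⟨a, b, c, d⟩ := this.1
  exact ⟨a, c, b, d⟩

theorem Rules2.outside (h : Rules2 n m A B K) (hn : A + 1 < n) (hm : B + 1 < m) (hA : 1 ≤ A)
    (hB : 1 ≤ B) (i j : ℕ) (ho : A < i ∨ B < j) (h1 : K i j) :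
    Sq K A B ∧ (n = A + 2 → m = B + 2 → (i < A ∨ j < B) → ∀ i j, i ≤ A → j ≤ B → K i j) := by
  by_cases hi : A < i
  · have h2 := h.low hn hm hA i j hi h1
    exact ⟨h2.1, fun h3 h4 h5 => h2.2 h3 (by omega)⟩
  · have h2 := h.rgt hn hm hB i j (by omega) h1
    exact ⟨h2.1, fun h3 h4 h5 => h2.2 h4 (by omega)⟩

/-- The corner square plus thickness on the right generates `R`. -/
theorem Rules2.thick (h : Rules2 n m A B K) (hn : A + 1 < n) (hm : B + 2 < m) (hA : 1 ≤ A)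
    (hB : 1 ≤ B) (hs : Sq K A B) : ∀ i j, i ≤ A → j ≤ B → K i j := by
  have h1 := h.quad hn (by omega) hs A (B + 1) le_rfl (by omega) hn hm
  have h2 : Sq K (A - 1) (B + 1) := h.lineV (B + 1) (A - 1) A
    (fun _ _ _ => by unfold cyc; omega) hm hn A (A - 1) (by omega) le_rfl le_rfl (by omega) h1
  have h3 := h.four1 hs.1 h2.1
  refine h.fillR_V hn (by omega) hB (A - 1) B (by omega) le_rfl h3 ?_
  rw [show A - 1 + 1 = A by omega]
  exact hs.1

theorem Rules2.main (h : Rules2 n m A B K) (hn : A + 1 < n) (hm : B + 1 < m) (hA : 1 ≤ A)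
    (hB : 1 ≤ B) (ho : ∃ i j, (A < i ∨ B < j) ∧ K i j)
    (hN : ∃ i j, K i j ∧ (i < A ∨ A + 1 < i ∨ j < B ∨ B + 1 < j))
    (i j : ℕ) (hi : i < n) (hj : j < m) : K i j := by
  obtain ⟨x, y, hxy, hK⟩ := ho
  have hs := (h.outside hn hm hA hB x y hxy hK).1
  refine h.all hn hm hs ?_ i j hi hj
  by_cases hm2 : B + 2 < m
  · exact h.thick hn hm2 hA hB hs
  by_cases hn2 : A + 2 < n
  · intro i j hi hj
    exact h.transpose.thick hm hn2 hB hA ⟨hs.1, hs.2.2.1, hs.2.1, hs.2.2.2⟩ j i hj hi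
  obtain ⟨u, v, hK, huv⟩ := hN
  have hbd := h.bd _ _ hK
  by_cases hR : A < u ∨ B < v
  · exact (h.outside hn hm hA hB u v hR hK).2 (by omega) (by omega) (by omega)
  rcases h.nbR u v hK with ⟨t, ht, hKt⟩ | ⟨t, ht, hKt⟩
  · by_cases hR2 : A < t
    · exact (h.outside hn hm hA hB t v (Or.inl hR2) hKt).2 (by omega) (by omega) (by omega)
    · rcases ht with rfl | rfl
      · exact h.fillR_V hn hm hB u v (by omega) (by omega) hK hKt
      · exact h.fillR_V hn hm hB t v (by omega) (by omega) hKt hK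
  · by_cases hR2 : B < t
    · exact (h.outside hn hm hA hB u t (Or.inr hR2) hKt).2 (by omega) (by omega) (by omega)
    · rcases ht with rfl | rfl
      · exact h.fillR_H hn hm hA u v (by omega) (by omega) hK hKt
      · exact h.fillR_H hn hm hA u t (by omega) (by omega) hKt hK

end

theorem arc_left {A B i j : ℕ} (h : PT A B i (j + 1)) : arcN A B i (j + 1) i j :=
  Or.inl ⟨rfl, rfl, h⟩

theorem arc_right {A B i j : ℕ} (h : ¬ PT A B i (j + 1)) : arcN A B i j i (j + 1) :=
  Or.inr (Or.inl ⟨rfl, rfl, h⟩)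

theorem arc_down {A B i j : ℕ} (h : PT A B (i + 1) j) : arcN A B i j (i + 1) j :=
  Or.inr (Or.inr (Or.inl ⟨rfl, rfl, h⟩))

theorem arc_up {A B i j : ℕ} (h : ¬ PT A B (i + 1) j) : arcN A B (i + 1) j i j :=
  Or.inr (Or.inr (Or.inr ⟨rfl, rfl, h⟩))

theorem PT_R {A B i j : ℕ} (h : i ≤ A ∧ j ≤ B) : PT A B i j ↔ (i + j + A + B) % 2 = 0 := by
  unfold PT; omega

theorem PT_O {A B i j : ℕ} (h : ¬ (i ≤ A ∧ j ≤ B)) : PT A B i j ↔ (i + j + A + B) % 2 = 1 := by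
  unfold PT; omega

theorem PT_flip {A B i j i' j' : ℕ} (hc : (i ≤ A ∧ j ≤ B) ↔ (i' ≤ A ∧ j' ≤ B))
    (h : (i + j + 1) % 2 = (i' + j') % 2) : PT A B i j ↔ ¬ PT A B i' j' := by
  by_cases h1 : i ≤ A ∧ j ≤ B
  · rw [PT_R h1, PT_R (hc.1 h1)]; omega
  · rw [PT_O h1, PT_O (fun h => h1 (hc.2 h))]; omega

theorem PT_same {A B i j i' j' : ℕ} (hc : ¬ ((i ≤ A ∧ j ≤ B) ↔ (i' ≤ A ∧ j' ≤ B)))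
    (h : (i + j + 1) % 2 = (i' + j') % 2) : PT A B i j ↔ PT A B i' j' := by
  by_cases h1 : i ≤ A ∧ j ≤ B
  · rw [PT_R h1, PT_O (by tauto)]; omega
  · rw [PT_O h1, PT_R (by tauto)]; omega

theorem arc_par {A B i j i' j' : ℕ} (h : arcN A B i j i' j') :
    (i + j + 1) % 2 = (i' + j') % 2 := by
  rcases h with ⟨rfl, rfl, h⟩ | ⟨rfl, rfl, h⟩ | ⟨rfl, rfl, h⟩ | ⟨rfl, rfl, h⟩ <;> omega

theorem arc_dir {A B i j i' j' : ℕ} (h : arcN A B i j i' j')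
    (hc : (i ≤ A ∧ j ≤ B) ↔ (i' ≤ A ∧ j' ≤ B)) :
    (PT A B i j ∧ ¬ PT A B i' j' ∧ i = i' ∧ (j = j' + 1 ∨ j' = j + 1)) ∨
    (¬ PT A B i j ∧ PT A B i' j' ∧ j = j' ∧ (i = i' + 1 ∨ i' = i + 1)) := by
  have hf := PT_flip hc (arc_par h)
  rcases h with ⟨rfl, rfl, h⟩ | ⟨rfl, rfl, h⟩ | ⟨rfl, rfl, h⟩ | ⟨rfl, rfl, h⟩
  · exact Or.inl ⟨h, hf.1 h, rfl, Or.inl rfl⟩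
  · exact Or.inl ⟨hf.2 h, h, rfl, Or.inr rfl⟩
  · exact Or.inr ⟨fun h' => hf.1 h' h, h, rfl, Or.inr rfl⟩
  · exact Or.inr ⟨h, not_not.1 (mt hf.2 h), rfl, Or.inl rfl⟩

theorem arc_rev {A B i j i' j' : ℕ} (h : (i = i' ∧ (j = j' + 1 ∨ j' = j + 1)) ∨
    (j = j' ∧ (i = i' + 1 ∨ i' = i + 1))) : arcN A B i j i' j' ∨ arcN A B i' j' i j := by
  rcases h with ⟨rfl, rfl | rfl⟩ | ⟨rfl, rfl | rfl⟩
  · by_cases hp : PT A B i (j' + 1)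
    · exact Or.inl (arc_left hp)
    · exact Or.inr (arc_right hp)
  · by_cases hp : PT A B i (j + 1)
    · exact Or.inr (arc_left hp)
    · exact Or.inl (arc_right hp)
  · by_cases hp : PT A B (i' + 1) j
    · exact Or.inr (arc_down hp)
    · exact Or.inl (arc_up hp)
  · by_cases hp : PT A B (i + 1) j
    · exact Or.inl (arc_down hp)
    · exact Or.inr (arc_up hp)

theorem arc_asymm {A B i j i' j' : ℕ} (h : arcN A B i j i' j') : ¬ arcN A B i' j' i j := by
  intro h'
  rcases h with ⟨rfl, rfl, h⟩ | ⟨rfl, rfl, h⟩ | ⟨rfl, rfl, h⟩ | ⟨rfl, rfl, h⟩ <;>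
  rcases h' with ⟨h4, h5, h6⟩ | ⟨h4, h5, h6⟩ | ⟨h4, h5, h6⟩ | ⟨h4, h5, h6⟩ <;>
  first | omega | exact h h6 | exact h6 h

/-- The direction of the arcs at an outer vertex. -/
theorem arc_outer {A B i j i' j' : ℕ} (ho : A < i ∨ B < j) (h : arcN A B i j i' j') :
    (PT A B i j → i = i') ∧ (¬ PT A B i j → j = j') := by
  have hs : ∀ i' j', (i' ≤ A ∧ j' ≤ B) ∨ ((i ≤ A ∧ j ≤ B) ↔ (i' ≤ A ∧ j' ≤ B)) := by
    intro i' j'; omega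
  rcases hs i' j' with h1 | h1
  · rcases h with ⟨rfl, rfl, h⟩ | ⟨rfl, rfl, h⟩ | ⟨rfl, rfl, h⟩ | ⟨rfl, rfl, h⟩
    · exact ⟨fun _ => rfl, fun h' => absurd h h'⟩
    · omega
    · omega
    · exact ⟨fun h' => absurd h' h, fun _ => rfl⟩
  · rcases arc_dir h h1 with h2 | h2
    · exact ⟨fun _ => h2.2.2.1, fun h' => absurd h2.1 h'⟩
    · exact ⟨fun h' => absurd h' h2.1, fun _ => h2.2.2.1⟩

theorem arc_outer' {A B i j i' j' : ℕ} (ho : A < i ∨ B < j) (h : arcN A B i' j' i j) :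
    (PT A B i j → j = j') ∧ (¬ PT A B i j → i = i') := by
  have hs : ∀ i' j', (i' ≤ A ∧ j' ≤ B) ∨ ((i' ≤ A ∧ j' ≤ B) ↔ (i ≤ A ∧ j ≤ B)) := by
    intro i' j'; omega
  rcases hs i' j' with h1 | h1
  · rcases h with ⟨rfl, rfl, h⟩ | ⟨rfl, rfl, h⟩ | ⟨rfl, rfl, h⟩ | ⟨rfl, rfl, h⟩
    · omega
    · exact ⟨fun h' => absurd h' h, fun _ => rfl⟩
    · exact ⟨fun _ => rfl, fun h' => absurd h h'⟩
    · omega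
  · rcases arc_dir h h1 with h2 | h2
    · exact ⟨fun h' => absurd h' h2.2.1, fun _ => h2.2.2.1.symm⟩
    · exact ⟨fun _ => h2.2.2.1.symm, fun h' => absurd h2.2.1 h'⟩

theorem rules_of (n m A B : ℕ) (K : ℕ → ℕ → Prop) (bd : ∀ i j, K i j → i < n ∧ j < m)
    (k2 : ∀ i j i' j' i'' j'', i' < n → j' < m → arcN A B i j i' j' → arcN A B i' j' i'' j'' →
      i ≠ i'' → K i j → K i'' j'' → K i' j')
    (k4 : ∀ i₁ j₁ i₂ j₂ i₃ j₃ i₄ j₄, i₂ < n → j₂ < m → i₃ < n → j₃ < m →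
      arcN A B i₁ j₁ i₂ j₂ → arcN A B i₂ j₂ i₃ j₃ → arcN A B i₃ j₃ i₄ j₄ → arcN A B i₄ j₄ i₁ j₁ →
      K i₁ j₁ → K i₄ j₄ → K i₂ j₂ ∧ K i₃ j₃) : Rules n m A B K where
  bd := bd
  out i j i' j' ho hi hj hi' hj' h1 h2 := by
    have hd : (arcN A B i' j i j ∧ arcN A B i j i j') ∨
        (arcN A B i j' i j ∧ arcN A B i j i' j) := by
      have hV : arcN A B i' j i j ∨ arcN A B i j i' j := arc_rev (Or.inr ⟨rfl, hi'⟩)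
      have hH : arcN A B i j' i j ∨ arcN A B i j i j' := arc_rev (Or.inl ⟨rfl, hj'⟩)
      by_cases hp : PT A B i j
      · refine Or.inl ⟨hV.resolve_right fun h => ?_, hH.resolve_left fun h => ?_⟩
        · have := (arc_outer ho h).1 hp; omega
        · have := (arc_outer' ho h).1 hp; omega
      · refine Or.inr ⟨hH.resolve_right fun h => ?_, hV.resolve_left fun h => ?_⟩
        · have := (arc_outer ho h).2 hp; omega
        · have := (arc_outer' ho h).2 hp; omega
    rcases hd with ⟨h3, h4⟩ | ⟨h3, h4⟩
    · exact k2 _ _ _ _ _ _ hi hj h3 h4 (by omega) h1 h2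
    · exact k2 _ _ _ _ _ _ hi hj h3 h4 (by omega) h2 h1
  sq i j hc hi hj hs := by
    have hd : (arcN A B i j i (j + 1) ∧ arcN A B i (j + 1) (i + 1) (j + 1) ∧
        arcN A B (i + 1) (j + 1) (i + 1) j ∧ arcN A B (i + 1) j i j) ∨
        (arcN A B i j (i + 1) j ∧ arcN A B (i + 1) j (i + 1) (j + 1) ∧
        arcN A B (i + 1) (j + 1) i (j + 1) ∧ arcN A B i (j + 1) i j) := by
      unfold cyc at hc
      have e1 : PT A B i (j + 1) ↔ ¬ PT A B (i + 1) (j + 1) := PT_flip (by omega) (by omega)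
      have e2 : PT A B (i + 1) j ↔ ¬ PT A B (i + 1) (j + 1) := PT_flip (by omega) (by omega)
      by_cases hp : PT A B (i + 1) (j + 1)
      · exact Or.inl ⟨arc_right (by tauto), arc_down hp, arc_left hp, arc_up (by tauto)⟩
      · exact Or.inr ⟨arc_down (e2.2 hp), arc_right hp, arc_up hp, arc_left (e1.2 hp)⟩
    have hi' : i < n := by omega
    have hj' : j < m := by omega
    rcases hd with ⟨a, b, c, d⟩ | ⟨a, b, c, d⟩
    · rcases hs with ⟨h1, h2⟩ | ⟨h1, h2⟩ | ⟨h1, h2⟩ | ⟨h1, h2⟩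
      · obtain ⟨h3, h4⟩ := k4 _ _ _ _ _ _ _ _ hi hj hi hj' b c d a h2 h1
        exact ⟨h1, h2, h4, h3⟩
      · obtain ⟨h3, h4⟩ := k4 _ _ _ _ _ _ _ _ hi' hj hi hj a b c d h1 h2
        exact ⟨h1, h3, h2, h4⟩
      · obtain ⟨h3, h4⟩ := k4 _ _ _ _ _ _ _ _ hi' hj' hi' hj d a b c h1 h2
        exact ⟨h3, h4, h1, h2⟩
      · obtain ⟨h3, h4⟩ := k4 _ _ _ _ _ _ _ _ hi hj' hi' hj' c d a b h2 h1
        exact ⟨h4, h1, h3, h2⟩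
    · rcases hs with ⟨h1, h2⟩ | ⟨h1, h2⟩ | ⟨h1, h2⟩ | ⟨h1, h2⟩
      · obtain ⟨h3, h4⟩ := k4 _ _ _ _ _ _ _ _ hi hj' hi hj a b c d h1 h2
        exact ⟨h1, h2, h3, h4⟩
      · obtain ⟨h3, h4⟩ := k4 _ _ _ _ _ _ _ _ hi hj hi' hj b c d a h2 h1
        exact ⟨h1, h4, h2, h3⟩
      · obtain ⟨h3, h4⟩ := k4 _ _ _ _ _ _ _ _ hi' hj hi' hj' c d a b h2 h1
        exact ⟨h4, h3, h1, h2⟩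
      · obtain ⟨h3, h4⟩ := k4 _ _ _ _ _ _ _ _ hi' hj' hi hj' d a b c h1 h2
        exact ⟨h3, h1, h4, h2⟩

/-- The arc relation on the grid. -/
def Arc (n m A B : ℕ) (x y : Fin n × Fin m) : Prop :=
  arcN A B x.1 x.2 y.1 y.2

/-- The numeric shadow of a set of vertices. -/
def nset {n m : ℕ} (C : Set (Fin n × Fin m)) (i j : ℕ) : Prop :=
  ∃ (hi : i < n) (hj : j < m), ((⟨i, hi⟩, ⟨j, hj⟩) : Fin n × Fin m) ∈ C

theorem rules_of_set (n m A B : ℕ) (C : Set (Fin n × Fin m))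
    (k2 : ∀ x y z, Arc n m A B x y → Arc n m A B y z → x.1 ≠ z.1 → x ∈ C → z ∈ C → y ∈ C)
    (k4 : ∀ x y z t, Arc n m A B x y → Arc n m A B y z → Arc n m A B z t → Arc n m A B t x →
      x ∈ C → t ∈ C → y ∈ C ∧ z ∈ C) : Rules n m A B (nset C) := by
  apply rules_of
  · rintro i j ⟨hi, hj, _⟩
    exact ⟨hi, hj⟩
  · rintro i j i' j' i'' j'' hi' hj' h1 h2 hne ⟨hi, hj, hK⟩ ⟨hi2, hj2, hK2⟩
    exact ⟨hi', hj', k2 (⟨i, hi⟩, ⟨j, hj⟩) (⟨i', hi'⟩, ⟨j', hj'⟩) (⟨i'', hi2⟩, ⟨j'', hj2⟩) h1 h2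
      (by simpa using hne) hK hK2⟩
  · rintro i₁ j₁ i₂ j₂ i₃ j₃ i₄ j₄ hi2 hj2 hi3 hj3 h1 h2 h3 h4 ⟨hi1, hj1, hK1⟩ ⟨hi4, hj4, hK4⟩
    have := k4 (⟨i₁, hi1⟩, ⟨j₁, hj1⟩) (⟨i₂, hi2⟩, ⟨j₂, hj2⟩) (⟨i₃, hi3⟩, ⟨j₃, hj3⟩)
      (⟨i₄, hi4⟩, ⟨j₄, hj4⟩) h1 h2 h3 h4 hK1 hK4
    exact ⟨⟨hi2, hj2, this.1⟩, ⟨hi3, hj3, this.2⟩⟩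

theorem walk_cons {V : Type*} {R : V → V → Prop} {k : ℕ} {f : ℕ → V} {x y z : V} (h : R x y)
    (hf : IsDirWalk R k f y z) : ∃ g, IsDirWalk R (k + 1) g x z ∧ g 0 = x ∧ ∀ i, g (i + 1) = f i := by
  refine ⟨fun i => match i with | 0 => x | i + 1 => f i, ⟨rfl, hf.2.1, ?_⟩, rfl, fun _ => rfl⟩
  rintro (_ | i) hi
  · simpa [hf.1] using h
  · exact hf.2.2 i (by omega)

theorem walk_tail {V : Type*} {R : V → V → Prop} {k : ℕ} {f : ℕ → V} {x z : V}
    (hf : IsDirWalk R (k + 1) f x z) :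
    R x (f 1) ∧ IsDirWalk R k (fun i => f (i + 1)) (f 1) z := by
  refine ⟨?_, rfl, hf.2.1, fun i hi => hf.2.2 (i + 1) (by omega)⟩
  have := hf.2.2 0 (by omega)
  rwa [hf.1] at this

theorem reach_cons {V : Type*} {R : V → V → Prop} {x y z : V} (h : R x y)
    (hf : DirReachable R y z) : DirReachable R x z := by
  obtain ⟨k, f, hf⟩ := hf
  obtain ⟨g, hg, -⟩ := walk_cons h hf
  exact ⟨_, g, hg⟩

theorem reach_refl {V : Type*} {R : V → V → Prop} (x : V) : DirReachable R x x :=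
  ⟨0, fun _ => x, rfl, rfl, fun i hi => by omega⟩

theorem reach_trans {V : Type*} {R : V → V → Prop} {x y z : V} (h : DirReachable R x y)
    (h2 : DirReachable R y z) : DirReachable R x z := by
  obtain ⟨k, f, hf⟩ := h
  induction k generalizing f x with
  | zero =>
    obtain rfl : x = y := hf.1.symm.trans hf.2.1
    exact h2
  | succ k ih =>
    obtain ⟨h1, h3⟩ := walk_tail hf
    exact reach_cons h1 (ih _ h3)

theorem reach_arc {V : Type*} {R : V → V → Prop} {x y : V} (h : R x y) : DirReachable R x y :=
  reach_cons h (reach_refl y)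

theorem corner1 {A B : ℕ} : arcN A B A B (A + 1) B := arc_down (by unfold PT; omega)
theorem corner2 {A B : ℕ} : arcN A B (A + 1) B (A + 1) (B + 1) := arc_right (by unfold PT; omega)
theorem corner3 {A B : ℕ} : arcN A B (A + 1) (B + 1) A (B + 1) := arc_up (by unfold PT; omega)
theorem corner4 {A B : ℕ} : arcN A B A (B + 1) A B := arc_left (by unfold PT; omega)
theorem inner1 {a b : ℕ} : arcN (a + 1) (b + 1) (a + 1) (b + 1) (a + 1) b :=
  arc_left (by unfold PT; omega)
theorem inner2 {a b : ℕ} : arcN (a + 1) (b + 1) (a + 1) b a b := arc_up (by unfold PT; omega)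
theorem inner3 {a b : ℕ} : arcN (a + 1) (b + 1) a b a (b + 1) := arc_right (by unfold PT; omega)
theorem inner4 {a b : ℕ} : arcN (a + 1) (b + 1) a (b + 1) (a + 1) (b + 1) :=
  arc_down (by unfold PT; omega)
theorem cut1 {a b : ℕ} : arcN (a + 1) (b + 1) a (b + 1) a (b + 1 + 1) :=
  arc_right (by unfold PT; omega)
theorem cut2 {a b : ℕ} : arcN (a + 1) (b + 1) (a + 1 + 1) b (a + 1) b :=
  arc_up (by unfold PT; omega)

theorem strong_arc (n m A B : ℕ) (hn : A + 1 < n) (hm : B + 1 < m) (hA : 1 ≤ A) (hB : 1 ≤ B) :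
    StrongConnected (Arc n m A B) := by
  obtain ⟨a, rfl⟩ : ∃ a, A = a + 1 := ⟨A - 1, by omega⟩
  obtain ⟨b, rfl⟩ : ∃ b, B = b + 1 := ⟨B - 1, by omega⟩
  generalize hAA : a + 1 = A at *
  generalize hBB : b + 1 = B at *
  let r : Fin n × Fin m := (⟨A, by omega⟩, ⟨B, by omega⟩)
  let C : Set (Fin n × Fin m) := {x | DirReachable (Arc n m A B) x r ∧ DirReachable (Arc n m A B) r x}
  have hr : Rules n m A B (nset C) := by
    apply rules_of_set
    · rintro x y z h1 h2 - hx hz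
      exact ⟨reach_cons h2 hz.1, reach_trans hx.2 (reach_arc h1)⟩
    · rintro x y z t h1 h2 h3 h4 hx ht
      exact ⟨⟨reach_cons h2 (reach_cons h3 ht.1), reach_trans hx.2 (reach_arc h1)⟩,
        ⟨reach_cons h3 ht.1, reach_trans hx.2 (reach_cons h1 (reach_arc h2))⟩⟩
  have hC : ∀ x, Arc n m A B r x → DirReachable (Arc n m A B) x r → x ∈ C :=
    fun x h1 h2 => ⟨h2, reach_arc h1⟩
  have h0 : nset C A B := ⟨by omega, by omega, reach_refl _, reach_refl _⟩
  have h1 : nset C (A + 1) B := by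
    refine ⟨hn, by omega, hC _ ?_ ?_⟩
    · exact corner1
    · have q : A < n := by omega
      refine reach_cons (y := (⟨A + 1, hn⟩, ⟨B + 1, hm⟩)) ?_
        (reach_cons (y := (⟨A, q⟩, ⟨B + 1, hm⟩)) ?_ (reach_arc ?_))
      · exact corner2
      · exact corner3
      · exact corner4
  have h2 : nset C A b := by
    subst hAA hBB
    refine ⟨by omega, by omega, hC _ ?_ ?_⟩
    · exact inner1
    · have q1 : a < n := by omega
      have q2 : b < m := by omega
      have q3 : b + 1 < m := by omega
      refine reach_cons (y := (⟨a, q1⟩, ⟨b, q2⟩)) ?_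
        (reach_cons (y := (⟨a, q1⟩, ⟨b + 1, q3⟩)) ?_ (reach_arc ?_))
      · exact inner2
      · exact inner3
      · exact inner4
  have hs : Sq (nset C) A B := hr.sq A B (by unfold cyc; omega) hn hm (Or.inr (Or.inl ⟨h0, h1⟩))
  have hR := hr.fillR_H hn hm hA A b le_rfl (by omega) h2 (by rwa [hBB])
  have hall := hr.all hn hm hs hR
  have : ∀ x, x ∈ C := fun x => (hall x.1 x.2 x.1.2 x.2.2).2.2
  exact fun u v => reach_trans (this u).1 (this v).2

theorem orient_arc (n m A B : ℕ) : IsOrientation (gridGraph n m) (Arc n m A B) := by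
  have hadj : ∀ x y : Fin n × Fin m, (gridGraph n m).Adj x y ↔
      ((x.1.val + 1 = y.1.val ∨ y.1.val + 1 = x.1.val) ∧ x.2.val = y.2.val) ∨
      ((x.2.val + 1 = y.2.val ∨ y.2.val + 1 = x.2.val) ∧ x.1.val = y.1.val) := by
    intro x y
    simp [gridGraph, SimpleGraph.boxProd_adj, SimpleGraph.pathGraph_adj, Fin.ext_iff]
  refine ⟨?_, ?_, ?_⟩
  · intro x y h
    rw [hadj]
    simp only [Arc, arcN] at h
    omega
  · intro x y h
    rw [hadj] at h
    exact arc_rev (by omega)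
  · intro x y h h'
    exact arc_asymm h h'

theorem walk_parity {n m A B : ℕ} {k : ℕ} {f : ℕ → Fin n × Fin m} {u v : Fin n × Fin m}
    (h : IsDirWalk (Arc n m A B) k f u v) :
    (u.1.val + u.2.val + k) % 2 = (v.1.val + v.2.val) % 2 := by
  induction k generalizing f u with
  | zero =>
    obtain rfl : u = v := h.1.symm.trans h.2.1
    rfl
  | succ k ih =>
    obtain ⟨h1, h3⟩ := walk_tail h
    have := ih h3
    simp only [Arc, arcN] at h1
    omega

/-- The distance bound relative to a target `(vi, vj)` in `R`. -/
def bound (A B vi vj k i j : ℕ) : Prop :=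
  (PT A B i j → min j B ≤ vj + (k + 1) / 2 ∧ vj ≤ min j B + (k + 1) / 2 ∧
    min i A ≤ vi + k / 2 ∧ vi ≤ min i A + k / 2 ∧ (k + vi + vj + A + B) % 2 = 0) ∧
  (¬ PT A B i j → min j B ≤ vj + k / 2 ∧ vj ≤ min j B + k / 2 ∧
    min i A ≤ vi + (k + 1) / 2 ∧ vi ≤ min i A + (k + 1) / 2 ∧ (k + vi + vj + A + B) % 2 = 1)

theorem bound_step {A B vi vj k i j i' j' : ℕ} (h : arcN A B i j i' j')
    (hc : (i ≤ A ∧ j ≤ B) ↔ (i' ≤ A ∧ j' ≤ B)) (hb : bound A B vi vj k i' j') :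
    bound A B vi vj (k + 1) i j := by
  rcases arc_dir h hc with ⟨h1, h2, rfl, h3⟩ | ⟨h1, h2, rfl, h3⟩
  · have h4 := hb.2 h2
    refine ⟨fun _ => ?_, fun h => absurd h1 h⟩
    clear h hc hb h1 h2
    refine ⟨?_, ?_, ?_, ?_, ?_⟩ <;> omega
  · have h4 := hb.1 h2
    refine ⟨fun h => absurd h h1, fun _ => ?_⟩
    clear h hc hb h1 h2
    refine ⟨?_, ?_, ?_, ?_, ?_⟩ <;> omega

theorem bound_cut {A B vi vj k i j i' j' : ℕ} (h : arcN A B i j i' j')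
    (hc : ¬ ((i ≤ A ∧ j ≤ B) ↔ (i' ≤ A ∧ j' ≤ B))) (hb : bound A B vi vj k i' j') :
    bound A B vi vj k i j := by
  have hp : PT A B i j ↔ PT A B i' j' := PT_same hc (arc_par h)
  have hi : min i A = min i' A := by
    simp only [arcN] at *; omega
  have hj : min j B = min j' B := by
    simp only [arcN] at *; omega
  unfold bound at *
  rwa [hp, hi, hj]

theorem bound_zero {A B i j : ℕ} (hi : i ≤ A) (hj : j ≤ B) : bound A B i j 0 i j := by
  unfold bound PT; omega

theorem walk_bound {n m A B : ℕ} {k : ℕ} {f : ℕ → Fin n × Fin m} {u v : Fin n × Fin m}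
    (h : IsDirWalk (Arc n m A B) k f u v) (hv1 : v.1.val ≤ A) (hv2 : v.2.val ≤ B) :
    (¬ (u.1.val ≤ A ∧ u.2.val ≤ B) → ∃ l, k = l + 1 ∧ bound A B v.1 v.2 l u.1 u.2) ∧
    ((u.1.val ≤ A ∧ u.2.val ≤ B) → bound A B v.1 v.2 k u.1 u.2 ∧
      ((∃ i ≤ k, ¬ ((f i).1.val ≤ A ∧ (f i).2.val ≤ B)) →
        ∃ l, k = l + 2 ∧ bound A B v.1 v.2 l u.1 u.2)) := by
  induction k generalizing f u with
  | zero =>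
    obtain rfl : u = v := h.1.symm.trans h.2.1
    refine ⟨fun h => absurd ⟨hv1, hv2⟩ h, fun _ => ⟨bound_zero hv1 hv2, ?_⟩⟩
    rintro ⟨i, hi, hf⟩
    obtain rfl : i = 0 := by omega
    rw [h.1] at hf
    exact absurd ⟨hv1, hv2⟩ hf
  | succ k ih =>
    obtain ⟨h1, h3⟩ := walk_tail h
    have hf1 := ih h3
    by_cases hy : (f 1).1.val ≤ A ∧ (f 1).2.val ≤ B
    · obtain ⟨hb, hl⟩ := hf1.2 hy
      refine ⟨fun hx => ⟨k, rfl, bound_cut h1 (by tauto) hb⟩, fun hx => ⟨bound_step h1 (by tauto) hb, ?_⟩⟩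
      rintro ⟨i, hi, hf⟩
      obtain ⟨t, rfl⟩ : ∃ t, i = t + 1 := by
        refine ⟨i - 1, ?_⟩
        rcases i with _ | i
        · rw [h.1] at hf; exact absurd hx hf
        · omega
      obtain ⟨l, rfl, hb2⟩ := hl ⟨t, by omega, hf⟩
      exact ⟨l + 1, rfl, bound_step h1 (by tauto) hb2⟩
    · obtain ⟨l, rfl, hb⟩ := hf1.1 hy
      refine ⟨fun hx => ⟨l + 1, rfl, bound_step h1 (by tauto) hb⟩, fun hx => ?_⟩
      have hb' := bound_cut h1 (by tauto) hb
      refine ⟨?_, fun _ => ⟨l, rfl, hb'⟩⟩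
      unfold bound at *
      refine ⟨fun hp => ?_, fun hp => ?_⟩
      · have := hb'.1 hp; omega
      · have := hb'.2 hp; omega

theorem bound_walk {n m A B : ℕ} (hn : A < n) (hm : B < m) (hA : 1 ≤ A) (hB : 1 ≤ B)
    (v : Fin n × Fin m) (hv1 : v.1.val ≤ A) (hv2 : v.2.val ≤ B) :
    ∀ (k : ℕ) (u : Fin n × Fin m), u.1.val ≤ A → u.2.val ≤ B → bound A B v.1 v.2 k u.1 u.2 →
    ∃ k' ≤ k, ∃ f, IsDirWalk (Arc n m A B) k' f u v := by
  intro k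
  induction k with
  | zero =>
    intro u hu1 hu2 hb
    have : u = v := by
      unfold bound at hb
      apply Prod.ext <;> apply Fin.ext
      · by_cases hp : PT A B u.1 u.2
        · have := hb.1 hp; omega
        · have := hb.2 hp; unfold PT at hp; omega
      · by_cases hp : PT A B u.1 u.2
        · have := hb.1 hp; omega
        · have := hb.2 hp; unfold PT at hp; omega
    subst this
    exact ⟨0, le_rfl, fun _ => u, rfl, rfl, fun i hi => by omega⟩
  | succ k ih =>
    intro u hu1 hu2 hb
    by_cases huv : u = v
    · subst huv
      exact ⟨0, by omega, fun _ => u, rfl, rfl, fun i hi => by omega⟩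
    have hne : u.1.val ≠ v.1.val ∨ u.2.val ≠ v.2.val := by
      by_contra hcon
      push Not at hcon
      exact huv (Prod.ext (Fin.ext hcon.1) (Fin.ext hcon.2))
    have step : ∃ i j, i ≤ A ∧ j ≤ B ∧ arcN A B u.1 u.2 i j ∧ bound A B v.1 v.2 k i j := by
      obtain ⟨⟨p, hp⟩, ⟨q, hq⟩⟩ := u
      obtain ⟨⟨r, hr⟩, ⟨s, hs⟩⟩ := v
      simp only at *
      clear ih huv
      by_cases hP : PT A B p q
      · have h1 := hb.1 hP
        have harc : ∀ j, j ≤ B → (j = q + 1 ∨ q = j + 1) → ¬ PT A B p j ∧ arcN A B p q p j := by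
          intro j hj hjq
          have hf : PT A B p q ↔ ¬ PT A B p j := PT_flip (by omega) (by omega)
          refine ⟨hf.1 hP, ?_⟩
          rcases hjq with rfl | rfl
          · exact arc_right (hf.1 hP)
          · exact arc_left hP
        obtain ⟨j, hj, hjq, hj1, hj2⟩ : ∃ j, j ≤ B ∧ (j = q + 1 ∨ q = j + 1) ∧
            j ≤ s + k / 2 ∧ s ≤ j + k / 2 := by
          rw [PT_R ⟨hu1, hu2⟩] at hP
          clear harc hb
          rcases lt_trichotomy q s with h | h | h
          · exact ⟨q + 1, by omega, by omega, by omega, by omega⟩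
          · by_cases h0 : q = 0
            · exact ⟨q + 1, by omega, by omega, by omega, by omega⟩
            · exact ⟨q - 1, by omega, by omega, by omega, by omega⟩
          · exact ⟨q - 1, by omega, by omega, by omega, by omega⟩
        have h2 := harc j hj hjq
        refine ⟨p, j, hu1, hj, h2.2, fun h => absurd h h2.1, fun _ => ?_⟩
        clear harc hb h2
        refine ⟨?_, ?_, ?_, ?_, ?_⟩ <;> omega
      · have h1 := hb.2 hP
        have harc : ∀ i, i ≤ A → (i = p + 1 ∨ p = i + 1) → PT A B i q ∧ arcN A B p q i q := by
          intro j hj hjq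
          have hf : PT A B p q ↔ ¬ PT A B j q := PT_flip (by omega) (by omega)
          have hP' := not_not.1 (mt hf.2 hP)
          refine ⟨hP', ?_⟩
          rcases hjq with rfl | rfl
          · exact arc_down hP'
          · exact arc_up hP
        obtain ⟨j, hj, hjq, hj1, hj2⟩ : ∃ j, j ≤ A ∧ (j = p + 1 ∨ p = j + 1) ∧
            j ≤ r + k / 2 ∧ r ≤ j + k / 2 := by
          rw [PT_R ⟨hu1, hu2⟩] at hP
          clear harc hb
          rcases lt_trichotomy p r with h | h | h
          · exact ⟨p + 1, by omega, by omega, by omega, by omega⟩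
          · by_cases h0 : p = 0
            · exact ⟨p + 1, by omega, by omega, by omega, by omega⟩
            · exact ⟨p - 1, by omega, by omega, by omega, by omega⟩
          · exact ⟨p - 1, by omega, by omega, by omega, by omega⟩
        have h2 := harc j hj hjq
        refine ⟨j, q, hj, hu2, h2.2, fun _ => ?_, fun h => absurd h2.1 h⟩
        clear harc hb h2
        refine ⟨?_, ?_, ?_, ?_, ?_⟩ <;> omega
    obtain ⟨i, j, hi, hj, harc, hb'⟩ := step
    obtain ⟨k', hk', f, hf⟩ := ih (⟨i, by omega⟩, ⟨j, by omega⟩) hi hj hb'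
    obtain ⟨g, hg, -⟩ := walk_cons (R := Arc n m A B) (x := u) (y := (⟨i, by omega⟩, ⟨j, by omega⟩)) harc hf
    exact ⟨k' + 1, by omega, g, hg⟩

/-- The rectangle. -/
def Rect (n m A B : ℕ) : Set (Fin n × Fin m) := {x | x.1.val ≤ A ∧ x.2.val ≤ B}

theorem rect_convex {n m A B : ℕ} (hn : A < n) (hm : B < m) (hA : 1 ≤ A) (hB : 1 ≤ B) :
    DConvex (Arc n m A B) (Rect n m A B) := by
  refine ⟨⟨(⟨A, hn⟩, ⟨B, hm⟩), le_rfl, le_rfl⟩, ?_⟩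
  intro u hu v hv k f hg i hi
  by_contra hcon
  obtain ⟨l, rfl, hb⟩ := ((walk_bound hg.1 hv.1 hv.2).2 hu).2 ⟨i, hi, hcon⟩
  obtain ⟨k', hk', f', hf'⟩ := bound_walk hn hm hA hB v hv.1 hv.2 l u hu.1 hu.2 hb
  have := hg.2 k' f' hf'
  omega

theorem rect_ncard {n m A B : ℕ} (hn : A < n) (hm : B < m) :
    (Rect n m A B).ncard = (A + 1) * (B + 1) := by
  have : Rect n m A B = ((Finset.Iic (⟨A, hn⟩ : Fin n) ×ˢ Finset.Iic (⟨B, hm⟩ : Fin m) :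
      Finset (Fin n × Fin m)) : Set (Fin n × Fin m)) := by
    ext x
    simp only [Rect, Set.mem_ofPred_eq, Finset.coe_product, Set.mem_prod, Finset.mem_coe,
      Finset.mem_Iic, Fin.le_def]
  rw [this, Set.ncard_coe_finset, Finset.card_product]
  simp

section
variable {n m A B : ℕ} {C : Set (Fin n × Fin m)}

theorem walk_zero {V : Type*} {R : V → V → Prop} {f : ℕ → V} {x y : V}
    (h : IsDirWalk R 0 f x y) : x = y := h.1.symm.trans h.2.1

theorem walk_one {V : Type*} {R : V → V → Prop} {f : ℕ → V} {x y : V}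
    (h : IsDirWalk R 1 f x y) : R x y := by
  have := h.2.2 0 (by omega)
  rw [h.1] at this
  simpa [h.2.1] using this

theorem walk_two {V : Type*} {R : V → V → Prop} {f : ℕ → V} {x y : V}
    (h : IsDirWalk R 2 f x y) : ∃ s, R x s ∧ R s y := by
  obtain ⟨h1, h2⟩ := walk_tail h
  exact ⟨_, h1, walk_one h2⟩

theorem walk_refl {V : Type*} {R : V → V → Prop} (x : V) : IsDirWalk R 0 (fun _ => x) x x :=
  ⟨rfl, rfl, fun i hi => by omega⟩

theorem conv2 (hC : DConvex (Arc n m A B) C) {x y z : Fin n × Fin m} (h1 : Arc n m A B x y)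
    (h2 : Arc n m A B y z) (hne : x ≠ z) (hx : x ∈ C) (hz : z ∈ C) : y ∈ C := by
  obtain ⟨f, hf, hf0, -⟩ := walk_cons h2 (walk_refl z)
  obtain ⟨g, hg, -, hg1⟩ := walk_cons h1 hf
  have hp := walk_parity hg
  have := hC.2 x hx z hz _ g ⟨hg, fun k' f' hf' => ?_⟩ 1 (by omega)
  · rwa [hg1 0, hf0] at this
  · have hp' := walk_parity hf'
    by_contra hlt
    obtain rfl : k' = 0 := by omega
    exact hne (walk_zero hf')

theorem conv3 (hC : DConvex (Arc n m A B) C) {x y z t : Fin n × Fin m} (h1 : Arc n m A B x y)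
    (h2 : Arc n m A B y z) (h3 : Arc n m A B z t) (h4 : Arc n m A B t x)
    (hx : x ∈ C) (ht : t ∈ C) : y ∈ C ∧ z ∈ C := by
  obtain ⟨e, he, he0, -⟩ := walk_cons h3 (walk_refl t)
  obtain ⟨f, hf, hf0, hf1⟩ := walk_cons h2 he
  obtain ⟨g, hg, -, hg1⟩ := walk_cons h1 hf
  have hp := walk_parity hg
  have := hC.2 x hx t ht _ g ⟨hg, fun k' f' hf' => ?_⟩
  · refine ⟨?_, ?_⟩
    · have h := this 1 (by omega)
      rwa [hg1 0, hf0] at h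
    · have h := this 2 (by omega)
      rwa [hg1 1, hf1 0, he0] at h
  · have hp' := walk_parity hf'
    by_contra hlt
    obtain rfl : k' = 1 := by omega
    have h5 : Arc n m A B x t := walk_one hf'
    exact arc_asymm h4 h5

theorem conv4 (hC : DConvex (Arc n m A B) C) {x y z w t : Fin n × Fin m} (h1 : Arc n m A B x y)
    (h2 : Arc n m A B y z) (h3 : Arc n m A B z w) (h4 : Arc n m A B w t) (hne : x ≠ t)
    (hno : ∀ s, Arc n m A B x s → ¬ Arc n m A B s t)
    (hx : x ∈ C) (ht : t ∈ C) : y ∈ C ∧ w ∈ C := by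
  obtain ⟨d, hd, hd0, -⟩ := walk_cons h4 (walk_refl t)
  obtain ⟨e, he, he0, he1⟩ := walk_cons h3 hd
  obtain ⟨f, hf, hf0, hf1⟩ := walk_cons h2 he
  obtain ⟨g, hg, -, hg1⟩ := walk_cons h1 hf
  have hp := walk_parity hg
  have := hC.2 x hx t ht _ g ⟨hg, fun k' f' hf' => ?_⟩
  · refine ⟨?_, ?_⟩
    · have h := this 1 (by omega)
      rwa [hg1 0, hf0] at h
    · have h := this 3 (by omega)
      rwa [hg1 2, hf1 1, he1 0, hd0] at h
  · have hp' := walk_parity hf'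
    by_contra hlt
    obtain rfl | rfl : k' = 0 ∨ k' = 2 := by omega
    · exact hne (walk_zero hf')
    · obtain ⟨s, hs1, hs2⟩ := walk_two hf'
      exact hno s hs1 hs2

theorem exists_geodesic {V : Type*} {R : V → V → Prop} {x y : V} (h : DirReachable R x y) :
    ∃ k f, IsGeodesic R k f x y := by
  classical
  obtain ⟨f, hf⟩ := Nat.find_spec h
  exact ⟨Nat.find h, f, hf, fun k' f' hf' => Nat.find_min' h ⟨f', hf'⟩⟩

theorem conv_out (hC : DConvex (Arc n m A B) C) (hs : StrongConnected (Arc n m A B))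
    {w u : Fin n × Fin m} (hw : w ∈ C) (hu : u ∈ C) (hne : w ≠ u) :
    ∃ z ∈ C, Arc n m A B w z := by
  obtain ⟨k, f, hf⟩ := exists_geodesic (hs w u)
  rcases k with _ | k
  · exact absurd (walk_zero hf.1) hne
  · exact ⟨f 1, hC.2 w hw u hu _ f hf 1 (by omega), (walk_tail hf.1).1⟩

theorem conv_in (hC : DConvex (Arc n m A B) C) (hs : StrongConnected (Arc n m A B))
    {w u : Fin n × Fin m} (hw : w ∈ C) (hu : u ∈ C) (hne : w ≠ u) :
    ∃ z ∈ C, Arc n m A B z w := by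
  obtain ⟨k, f, hf⟩ := exists_geodesic (hs u w)
  rcases k with _ | k
  · exact absurd (walk_zero hf.1).symm hne
  · refine ⟨f k, hC.2 u hu w hw _ f hf k (by omega), ?_⟩
    have := hf.1.2.2 k (by omega)
    rwa [hf.1.2.1] at this

theorem nset_of {x : Fin n × Fin m} (h : x ∈ C) : nset C x.1 x.2 := ⟨x.1.2, x.2.2, h⟩

theorem arc_adj {i j i' j' : ℕ} (h : arcN A B i j i' j') :
    (i = i' ∧ (j' = j + 1 ∨ j = j' + 1)) ∨ (j = j' ∧ (i' = i + 1 ∨ i = i' + 1)) := by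
  rcases h with ⟨h1, h2, -⟩ | ⟨h1, h2, -⟩ | ⟨h1, h2, -⟩ | ⟨h1, h2, -⟩ <;> omega

theorem no_two1 {a b i j : ℕ} (h1 : arcN (a + 1) (b + 1) (a + 1) (b + 1) i j)
    (h2 : arcN (a + 1) (b + 1) i j a (b + 1 + 1)) : False := by
  have e1 := arc_adj h1
  have e2 := arc_adj h2
  obtain ⟨rfl, rfl⟩ | ⟨rfl, rfl⟩ : (i = a ∧ j = b + 1) ∨ (i = a + 1 ∧ j = b + 1 + 1) := by omega
  · exact arc_asymm inner4 h1
  · exact arc_asymm corner4 h1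

theorem no_two2 {a b i j : ℕ} (h1 : arcN (a + 1) (b + 1) (a + 1 + 1) b i j)
    (h2 : arcN (a + 1) (b + 1) i j (a + 1) (b + 1)) : False := by
  have e1 := arc_adj h1
  have e2 := arc_adj h2
  obtain ⟨rfl, rfl⟩ | ⟨rfl, rfl⟩ : (i = a + 1 ∧ j = b) ∨ (i = a + 1 + 1 ∧ j = b + 1) := by omega
  · exact arc_asymm inner1 h2
  · exact arc_asymm corner1 h2

theorem rules2_of_convex (hA : 1 ≤ A) (hB : 1 ≤ B)
    (hs : StrongConnected (Arc n m A B)) (hC : DConvex (Arc n m A B) C)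
    (h2 : ∀ w ∈ C, ∃ u ∈ C, w ≠ u) : Rules2 n m A B (nset C) where
  toRules := by
    refine rules_of_set _ _ _ _ _ ?_ ?_
    · intro x y z h1 h2 hne
      exact conv2 hC h1 h2 (fun h => hne (by rw [h]))
    · intro x y z t h1 h2 h3 h4
      exact conv3 hC h1 h2 h3 h4
  nb := by
    rintro i j ho ⟨hi, hj, hK⟩
    obtain ⟨u, hu, hne⟩ := h2 _ hK
    obtain ⟨y, hy, hy'⟩ := conv_in hC hs hK hu hne
    obtain ⟨z, hz, hz'⟩ := conv_out hC hs hK hu hne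
    change arcN A B y.1 y.2 i j at hy'
    change arcN A B i j z.1 z.2 at hz'
    have e1 := arc_adj hy'
    have e2 := arc_adj hz'
    have hy2 := nset_of hy
    have hz2 := nset_of hz
    by_cases hp : PT A B i j
    · have h3 := (arc_outer' ho hy').1 hp
      have h4 := (arc_outer ho hz').1 hp
      rw [← h3] at hy2
      rw [← h4] at hz2
      exact ⟨⟨_, by omega, hy2⟩, ⟨_, by omega, hz2⟩⟩
    · have h3 := (arc_outer' ho hy').2 hp
      have h4 := (arc_outer ho hz').2 hp
      rw [← h3] at hy2
      rw [← h4] at hz2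
      exact ⟨⟨_, by omega, hz2⟩, ⟨_, by omega, hy2⟩⟩
  nbR := by
    rintro i j ⟨hi, hj, hK⟩
    obtain ⟨u, hu, hne⟩ := h2 _ hK
    obtain ⟨z, hz, hz'⟩ := conv_out hC hs hK hu hne
    change arcN A B i j z.1 z.2 at hz'
    have hz2 := nset_of hz
    rcases arc_adj hz' with ⟨e1, e2⟩ | ⟨e1, e2⟩
    · rw [← e1] at hz2
      exact Or.inr ⟨_, e2, hz2⟩
    · rw [← e1] at hz2
      exact Or.inl ⟨_, e2, hz2⟩
  four1 := by
    obtain ⟨a, rfl⟩ : ∃ a, A = a + 1 := ⟨A - 1, by omega⟩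
    obtain ⟨b, rfl⟩ : ∃ b, B = b + 1 := ⟨B - 1, by omega⟩
    rintro ⟨hi, hj, hK⟩ ⟨hi', hj', hK'⟩
    refine ⟨hi', hj, ?_⟩
    refine (conv4 hC (x := (⟨a + 1, hi⟩, ⟨b + 1, hj⟩)) (y := (⟨a + 1, hi⟩, ⟨b, by omega⟩))
      (z := (⟨a, by omega⟩, ⟨b, by omega⟩)) (w := (⟨a, by omega⟩, ⟨b + 1, hj⟩))
      (t := (⟨a, hi'⟩, ⟨b + 1 + 1, hj'⟩)) inner1 inner2 inner3 cut1 ?_ ?_ hK hK').2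
    · simp
    · exact fun s h1 h2 => no_two1 h1 h2
  four2 := by
    obtain ⟨a, rfl⟩ : ∃ a, A = a + 1 := ⟨A - 1, by omega⟩
    obtain ⟨b, rfl⟩ : ∃ b, B = b + 1 := ⟨B - 1, by omega⟩
    rintro ⟨hi, hj, hK⟩ ⟨hi', hj', hK'⟩
    refine ⟨hi, hj', ?_⟩
    refine (conv4 hC (x := (⟨a + 1 + 1, hi'⟩, ⟨b, hj'⟩)) (y := (⟨a + 1, hi⟩, ⟨b, by omega⟩))
      (z := (⟨a, by omega⟩, ⟨b, by omega⟩)) (w := (⟨a, by omega⟩, ⟨b + 1, hj⟩))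
      (t := (⟨a + 1, hi⟩, ⟨b + 1, hj⟩)) cut2 inner2 inner3 inner4 ?_ ?_ hK' hK).1
    · simp
    · exact fun s h1 h2 => no_two2 h1 h2

theorem convex_card (hn : A + 1 < n) (hm : B + 1 < m) (hA : 1 ≤ A) (hB : 1 ≤ B)
    (hC : DConvex (Arc n m A B) C) (hne : C ≠ Set.univ) : C.ncard ≤ (A + 1) * (B + 1) := by
  by_contra hlt
  push Not at hlt
  have h4 : 2 * 2 ≤ (A + 1) * (B + 1) := Nat.mul_le_mul (by omega) (by omega)
  have h2 : ∀ w ∈ C, ∃ u ∈ C, w ≠ u := by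
    intro w hw
    obtain ⟨u, hu, h⟩ := Set.exists_ne_of_one_lt_ncard (show 1 < C.ncard by omega) w
    exact ⟨u, hu, h.symm⟩
  have hr := rules2_of_convex hA hB (strong_arc n m A B hn hm hA hB) hC h2
  have ho : ∃ i j, (A < i ∨ B < j) ∧ nset C i j := by
    by_contra hcon
    have hsub : C ⊆ Rect n m A B := by
      intro x hx
      by_contra hx'
      exact hcon ⟨x.1, x.2, by simp only [Rect, Set.mem_ofPred_eq] at hx'; omega, nset_of hx⟩
    have := Set.ncard_le_ncard hsub
    rw [rect_ncard (by omega) (by omega)] at this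
    omega
  have hN : ∃ i j, nset C i j ∧ (i < A ∨ A + 1 < i ∨ j < B ∨ B + 1 < j) := by
    by_contra hcon
    have hsub : C ⊆ ((({⟨A, by omega⟩, ⟨A + 1, hn⟩} : Finset (Fin n)) ×ˢ
        ({⟨B, by omega⟩, ⟨B + 1, hm⟩} : Finset (Fin m)) : Finset (Fin n × Fin m)) :
        Set (Fin n × Fin m)) := by
      intro x hx
      by_contra hx'
      refine hcon ⟨x.1, x.2, nset_of hx, ?_⟩
      simp only [Finset.coe_product, Set.mem_prod, Finset.mem_coe, Finset.mem_insert,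
        Finset.mem_singleton, Fin.ext_iff] at hx'
      omega
    have := Set.ncard_le_ncard hsub
    rw [Set.ncard_coe_finset, Finset.card_product] at this
    have h5 := Nat.mul_le_mul
      (Finset.card_le_two (a := (⟨A, by omega⟩ : Fin n)) (b := ⟨A + 1, hn⟩))
      (Finset.card_le_two (a := (⟨B, by omega⟩ : Fin m)) (b := ⟨B + 1, hm⟩))
    omega
  apply hne
  ext x
  exact ⟨fun _ => trivial, fun _ => (hr.main hn hm hA hB ho hN x.1 x.2 x.1.2 x.2.2).2.2⟩

end

/-- Realizable values `ab` in the strong convexity spectrum of `P_n □ P_m`. -/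
theorem ab_mem_strongConvexitySpectrum_grid (n m : ℕ) (hn : 4 ≤ n) (hm : 4 ≤ m)
    (a b : ℕ) (ha2 : 2 ≤ a) (han : a ≤ n - 1) (hb2 : 2 ≤ b) (hbm : b ≤ m - 1) :
    a * b ∈ strongConvexitySpectrum (gridGraph n m) := by
  obtain ⟨A, rfl⟩ : ∃ A, a = A + 1 := ⟨a - 1, by omega⟩
  obtain ⟨B, rfl⟩ : ∃ B, b = B + 1 := ⟨b - 1, by omega⟩
  refine ⟨Arc n m A B, orient_arc n m A B,
    strong_arc n m A B (by omega) (by omega) (by omega) (by omega), ?_⟩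
  refine IsGreatest.csSup_eq ⟨⟨Rect n m A B, rect_convex (by omega) (by omega) (by omega)
    (by omega), ?_, rect_ncard (by omega) (by omega)⟩, ?_⟩
  · intro h
    have : ((⟨A + 1, by omega⟩, ⟨0, by omega⟩) : Fin n × Fin m) ∈ Rect n m A B := by
      rw [h]; trivial
    have h1 : A + 1 ≤ A := this.1
    omega
  · rintro k ⟨C, hC, hne, rfl⟩
    exact convex_card (by omega) (by omega) (by omega) (by omega) hC hne
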